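/- There exist C > 0 and h₀ > 0 such that for every h ∈ (0,h₀), every E₀ ∈ ℝ with |E₀ − (1+h)| ≤ e^{−1/(10h)}, every R̃ ∈ [R, R+1], and every v ∈ C²([3.5, R+1];ℂ) with −h²v'' + (V−E₀)v = 0 on [3.5,R+1], one has ‖v‖_{H¹_h(3.5,R̃)} ≤ C (|W(v,v₊)(3.5)| + |W(v,v₋)(3.5)|). -/

import Mathlib

open MeasureTheory Set Real

noncomputable section

/-- The phase `Φ(x) = ∫_{4-E₀}^x √(E₀ - V(y)) dy`. -/
def wkbPhase (V : ℝ → ℝ) (E₀ : ℝ) (x : ℝ) : ℝ :=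
  ∫ y in (4 - E₀)..x, Real.sqrt (E₀ - V y)

/-- The WKB solution `v₊(x) = (E₀ - V(x))^{-1/4} e^{iΦ(x)/h}`. -/
def wkbPlus (V : ℝ → ℝ) (h E₀ : ℝ) (x : ℝ) : ℂ :=
  (((E₀ - V x) ^ (-(1 / 4 : ℝ)) : ℝ) : ℂ) * Complex.exp (Complex.I * (wkbPhase V E₀ x) / h)

/-- The WKB solution `v₋(x) = (E₀ - V(x))^{-1/4} e^{-iΦ(x)/h}`. -/
def wkbMinus (V : ℝ → ℝ) (h E₀ : ℝ) (x : ℝ) : ℂ :=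
  (((E₀ - V x) ^ (-(1 / 4 : ℝ)) : ℝ) : ℂ) * Complex.exp (-Complex.I * (wkbPhase V E₀ x) / h)

/-- The semiclassical Wronskian `W(v, v₊)(x)`. -/
def wrPlus (V : ℝ → ℝ) (h E₀ : ℝ) (v v' : ℝ → ℂ) (x : ℝ) : ℂ :=
  v x * ((h : ℂ) * deriv (wkbPlus V h E₀) x) - wkbPlus V h E₀ x * ((h : ℂ) * v' x)

/-- The semiclassical Wronskian `W(v, v₋)(x)`. -/
def wrMinus (V : ℝ → ℝ) (h E₀ : ℝ) (v v' : ℝ → ℂ) (x : ℝ) : ℂ :=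
  v x * ((h : ℂ) * deriv (wkbMinus V h E₀) x) - wkbMinus V h E₀ x * ((h : ℂ) * v' x)

/-! A solution of `-h² v'' + (V - E) v = 0` has the energy `F = ‖h v'‖² + (E - V) ‖v‖²`, and
`F' = -V' ‖v‖²` carries no factor `1 / h`. On an interval where `E - V ≥ c > 0`, Grönwall's
inequality therefore bounds `F` by its initial value uniformly in `h`, and `F` dominates both
integrands of the `H¹_h` norm. The initial value is read off the two Wronskians: they are
`v_± (± i √(E - V) v - P)` with `P` a perturbation of `h v'` of size `O(h) ‖v‖` and
`|v_±|² = (E - V)^{-1/2}`, so the parallelogram law expresses `‖P‖² + (E - V) ‖v‖²` exactly by the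
sum of their squared norms. -/

section Energy

variable {F : Type*} [NormedAddCommGroup F]

/-- The energy density `‖h v'‖² + Q ‖v‖²` of the semiclassical equation `h² v'' + Q v = 0`. The
derivative `v'` is a separate argument, as in `wrPlus`. -/
def semiclassicalEnergy [NormedSpace ℝ F] (h : ℝ) (Q : ℝ → ℝ) (v v' : ℝ → F) (x : ℝ) : ℝ :=
  ‖h • v' x‖ ^ 2 + Q x * ‖v x‖ ^ 2

lemma hasDerivWithinAt_semiclassicalEnergy [InnerProductSpace ℝ F] {h Q₁ x : ℝ} {Q : ℝ → ℝ}
    {v v' : ℝ → F} {w : F} {s : Set ℝ} (hQ : HasDerivWithinAt Q Q₁ s x)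
    (hv : HasDerivWithinAt v (v' x) s x) (hv' : HasDerivWithinAt v' w s x)
    (hw : h ^ 2 • w + Q x • v x = 0) :
    HasDerivWithinAt (semiclassicalEnergy h Q v v') (Q₁ * ‖v x‖ ^ 2) s x := by
  refine ((hv'.const_smul h).norm_sq.add (hQ.mul hv.norm_sq)).congr_deriv ?_
  have inner_eq : h ^ 2 * inner ℝ (v' x) w + Q x * inner ℝ (v' x) (v x) = 0 := by
    rw [← inner_smul_right, ← inner_smul_right, ← inner_add_right, hw, inner_zero_right]
  rw [Pi.smul_apply, real_inner_smul_left, real_inner_smul_right, real_inner_comm (v' x) (v x)]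
  linear_combination 2 * inner_eq

lemma semiclassicalEnergy_le_mul_exp [InnerProductSpace ℝ F] {h a b K : ℝ} {Q Q' : ℝ → ℝ}
    {v v' v'' : ℝ → F} (hK : 0 ≤ K)
    (hQ_nonneg : ∀ x ∈ Icc a b, 0 ≤ Q x)
    (hQ : ∀ x ∈ Icc a b, HasDerivWithinAt Q (Q' x) (Icc a b) x)
    (hQ_le : ∀ x ∈ Icc a b, |Q' x| ≤ K * Q x)
    (hv : ∀ x ∈ Icc a b, HasDerivWithinAt v (v' x) (Icc a b) x)
    (hv' : ∀ x ∈ Icc a b, HasDerivWithinAt v' (v'' x) (Icc a b) x)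
    (heq : ∀ x ∈ Icc a b, h ^ 2 • v'' x + Q x • v x = 0) {x : ℝ} (hx : x ∈ Icc a b) :
    semiclassicalEnergy h Q v v' x ≤ semiclassicalEnergy h Q v v' a * exp (K * (x - a)) := by
  have deriv_energy : ∀ y ∈ Icc a b,
      HasDerivWithinAt (semiclassicalEnergy h Q v v') (Q' y * ‖v y‖ ^ 2) (Icc a b) y :=
    fun y hy => hasDerivWithinAt_semiclassicalEnergy (hQ y hy) (hv y hy) (hv' y hy) (heq y hy)
  have energy_nonneg : ∀ y ∈ Icc a b, 0 ≤ semiclassicalEnergy h Q v v' y := fun y hy =>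
    add_nonneg (sq_nonneg _) (mul_nonneg (hQ_nonneg y hy) (sq_nonneg _))
  have deriv_le : ∀ y ∈ Icc a b,
      ‖Q' y * ‖v y‖ ^ 2‖ ≤ K * ‖semiclassicalEnergy h Q v v' y‖ + 0 := by
    intro y hy
    rw [norm_of_nonneg (energy_nonneg y hy), norm_mul, norm_pow, norm_norm, norm_eq_abs, add_zero]
    calc |Q' y| * ‖v y‖ ^ 2 ≤ K * Q y * ‖v y‖ ^ 2 := by gcongr; exact hQ_le y hy
      _ = K * (Q y * ‖v y‖ ^ 2) := mul_assoc _ _ _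
      _ ≤ K * semiclassicalEnergy h Q v v' y := by
          gcongr
          exact le_add_of_nonneg_left (sq_nonneg _)
  have ha : a ∈ Icc a b := left_mem_Icc.2 (hx.1.trans hx.2)
  have gronwall := norm_le_gronwallBound_of_norm_deriv_right_le
    (fun y hy => (deriv_energy y hy).continuousWithinAt)
    (fun y hy => (deriv_energy y (Ico_subset_Icc_self hy)).mono_of_mem_nhdsWithin
      (Icc_mem_nhdsGE_of_mem hy))
    (norm_of_nonneg (energy_nonneg a ha)).le
    (fun y hy => deriv_le y (Ico_subset_Icc_self hy)) x hx
  rwa [norm_of_nonneg (energy_nonneg x hx), gronwallBound_ε0] at gronwall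

lemma setIntegral_Ioo_norm_sq_le {f : ℝ → F} {a b K : ℝ} (hab : a ≤ b)
    (hf : ∀ x ∈ Ioo a b, ‖f x‖ ^ 2 ≤ K) : ∫ x in Ioo a b, ‖f x‖ ^ 2 ≤ K * (b - a) := by
  have norm_integral_le := norm_setIntegral_le_of_norm_le_const (μ := volume)
    (f := fun x => ‖f x‖ ^ 2) measure_Ioo_lt_top
    (fun x hx => (norm_of_nonneg (sq_nonneg ‖f x‖)).trans_le (hf x hx))
  rw [volume_real_Ioo_of_le hab] at norm_integral_le
  exact (le_norm_self _).trans norm_integral_le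

lemma setIntegral_norm_sq_add_le_of_semiclassicalEnergy_le [NormedSpace ℝ F] {h a b c K : ℝ}
    {Q : ℝ → ℝ} {v v' : ℝ → F} (hab : a ≤ b) (hc : 0 < c) (hQ : ∀ x ∈ Ioo a b, c ≤ Q x)
    (hK : ∀ x ∈ Ioo a b, semiclassicalEnergy h Q v v' x ≤ K) :
    (∫ x in Ioo a b, ‖v x‖ ^ 2) + ∫ x in Ioo a b, ‖h • v' x‖ ^ 2 ≤ (1 / c + 1) * (b - a) * K := by
  have potential_le : ∀ x ∈ Ioo a b, c * ‖v x‖ ^ 2 ≤ Q x * ‖v x‖ ^ 2 := fun x hx =>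
    mul_le_mul_of_nonneg_right (hQ x hx) (sq_nonneg _)
  have v_le : ∀ x ∈ Ioo a b, ‖v x‖ ^ 2 ≤ K / c := fun x hx =>
    (le_div_iff₀' hc).2 <| (potential_le x hx).trans <|
      (le_add_of_nonneg_left (sq_nonneg _)).trans (hK x hx)
  have v'_le : ∀ x ∈ Ioo a b, ‖h • v' x‖ ^ 2 ≤ K := fun x hx =>
    (le_add_of_nonneg_right ((by positivity : 0 ≤ c * ‖v x‖ ^ 2).trans (potential_le x hx))).trans
      (hK x hx)
  calc _ ≤ K / c * (b - a) + K * (b - a) :=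
        add_le_add (setIntegral_Ioo_norm_sq_le hab v_le) (setIntegral_Ioo_norm_sq_le hab v'_le)
    _ = (1 / c + 1) * (b - a) * K := by ring

end Energy

section WKB

variable {V : ℝ → ℝ} {h E V₁ x : ℝ} {v v' : ℝ → ℂ}

lemma wkbMinus_eq_wkbPlus_neg : wkbMinus V h E = wkbPlus V (-h) E := by
  funext y
  simp only [wkbMinus, wkbPlus, Complex.ofReal_neg, div_neg, neg_mul, neg_div]

lemma wrMinus_eq_neg_wrPlus_neg : wrMinus V h E v v' x = -wrPlus V (-h) E v v' x := by
  rw [wrMinus, wrPlus, wkbMinus_eq_wkbPlus_neg]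
  push_cast
  ring

lemma hasDerivAt_wkbPhase (hV : Continuous V) : HasDerivAt (wkbPhase V E) √(E - V x) x := by
  have integrand_continuous : Continuous fun y => √(E - V y) := by fun_prop
  exact integrand_continuous.integral_hasStrictDerivAt _ _ |>.hasDerivAt

lemma hasDerivAt_wkbPlus (hV : Continuous V) (hV₁ : HasDerivAt V V₁ x) (hE : V x < E) :
    HasDerivAt (wkbPlus V h E)
      (wkbPlus V h E x * (V₁ / (4 * (E - V x)) + Complex.I * √(E - V x) / h)) x := by
  have hQ : E - V x ≠ 0 := (sub_pos.2 hE).ne'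
  have amplitude := ((hV₁.const_sub E).rpow_const (p := -(1 / 4)) (Or.inl hQ)).ofReal_comp
  have oscillation := (((hasDerivAt_wkbPhase (E := E) (x := x) hV).ofReal_comp.const_mul
    Complex.I).div_const (h : ℂ)).cexp
  refine (amplitude.mul oscillation).congr_deriv ?_
  have hQ' : (E : ℂ) - V x ≠ 0 := by exact_mod_cast hQ
  rw [rpow_sub_one hQ, wkbPlus]
  push_cast
  field_simp

lemma norm_wkbPlus (hE : V x ≤ E) : ‖wkbPlus V h E x‖ = (E - V x) ^ (-(1 / 4 : ℝ)) := by
  have phase_eq : Complex.I * wkbPhase V E x / h = (wkbPhase V E x / h : ℝ) * Complex.I := by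
    push_cast
    ring
  rw [wkbPlus, phase_eq, norm_mul, Complex.norm_exp_ofReal_mul_I, mul_one, Complex.norm_real,
    norm_of_nonneg (rpow_nonneg (sub_nonneg.2 hE) _)]

lemma sqrt_mul_norm_wkbPlus_sq (hE : V x < E) : √(E - V x) * ‖wkbPlus V h E x‖ ^ 2 = 1 := by
  have hQ : 0 < E - V x := sub_pos.2 hE
  rw [norm_wkbPlus hE.le, sqrt_eq_rpow, ← rpow_natCast, ← rpow_mul hQ.le, ← rpow_add hQ]
  norm_num

lemma wrPlus_eq (hh : h ≠ 0) (hV : Continuous V) (hV₁ : HasDerivAt V V₁ x) (hE : V x < E) :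
    wrPlus V h E v v' x = wkbPlus V h E x *
      (Complex.I * √(E - V x) * v x - h * (v' x - (V₁ / (4 * (E - V x)) : ℝ) * v x)) := by
  have hh' : (h : ℂ) ≠ 0 := by exact_mod_cast hh
  rw [wrPlus, (hasDerivAt_wkbPlus hV hV₁ hE).deriv]
  push_cast
  field_simp
  ring

lemma sqrt_mul_norm_wronskian_sq_add (hh : h ≠ 0) (hV : Continuous V) (hV₁ : HasDerivAt V V₁ x)
    (hE : V x < E) :
    √(E - V x) * (‖wrPlus V h E v v' x‖ ^ 2 + ‖wrMinus V h E v v' x‖ ^ 2) =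
      2 * (‖h * (v' x - (V₁ / (4 * (E - V x)) : ℝ) * v x)‖ ^ 2 + (E - V x) * ‖v x‖ ^ 2) := by
  set p : ℂ := h * (v' x - (V₁ / (4 * (E - V x)) : ℝ) * v x)
  set r : ℂ := Complex.I * √(E - V x) * v x with hr
  have plus_eq : wrPlus V h E v v' x = wkbPlus V h E x * (r - p) := wrPlus_eq hh hV hV₁ hE
  have minus_eq : wrMinus V h E v v' x = -(wkbPlus V (-h) E x * (r + p)) := by
    rw [wrMinus_eq_neg_wrPlus_neg, wrPlus_eq (neg_ne_zero.2 hh) hV hV₁ hE, Complex.ofReal_neg,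
      neg_mul, sub_neg_eq_add]
  have norm_r : ‖r‖ ^ 2 = (E - V x) * ‖v x‖ ^ 2 := by
    rw [hr, norm_mul, norm_mul, Complex.norm_I, one_mul, mul_pow, Complex.norm_real, norm_eq_abs,
      sq_abs, sq_sqrt (sub_nonneg.2 hE.le)]
  rw [plus_eq, minus_eq, norm_neg, norm_mul, norm_mul, mul_pow, mul_pow, ← norm_r]
  linear_combination ‖r - p‖ ^ 2 * sqrt_mul_norm_wkbPlus_sq (h := h) hE
    + ‖r + p‖ ^ 2 * sqrt_mul_norm_wkbPlus_sq (h := -h) hE + parallelogram_law_with_norm ℝ r p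

lemma semiclassicalEnergy_le_wronskians (hh : h ≠ 0) (hV : Continuous V)
    (hV₁ : HasDerivAt V V₁ x) (hE : V x < E) :
    semiclassicalEnergy h (fun y => E - V y) v v' x ≤
      √(E - V x) * (1 + h ^ 2 * V₁ ^ 2 / (16 * (E - V x) ^ 3)) *
        (‖wrPlus V h E v v' x‖ ^ 2 + ‖wrMinus V h E v v' x‖ ^ 2) := by
  have wronskians := sqrt_mul_norm_wronskian_sq_add (v := v) (v' := v') hh hV hV₁ hE
  have hQ : 0 < E - V x := sub_pos.2 hE
  set Q := E - V x
  set d := V₁ / (4 * Q) with hd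
  set p : ℂ := h * (v' x - d * v x) with hp
  have norm_deriv_le : ‖h • v' x‖ ^ 2 ≤ 2 * (‖p‖ ^ 2 + h ^ 2 * d ^ 2 * ‖v x‖ ^ 2) := by
    have decomposition : h • v' x = p + (h * d : ℝ) * v x := by
      rw [hp, Complex.real_smul]
      push_cast
      ring
    calc ‖h • v' x‖ ^ 2 ≤ (‖p‖ + ‖(h * d : ℝ) * v x‖) ^ 2 := by
          rw [decomposition]
          gcongr
          exact norm_add_le _ _
      _ ≤ 2 * (‖p‖ ^ 2 + ‖(h * d : ℝ) * v x‖ ^ 2) := add_sq_le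
      _ = 2 * (‖p‖ ^ 2 + h ^ 2 * d ^ 2 * ‖v x‖ ^ 2) := by
          rw [norm_mul _ (v x), Complex.norm_real, mul_pow, norm_eq_abs, sq_abs, mul_pow]
  have coefficient_eq : h ^ 2 * V₁ ^ 2 / (16 * Q ^ 3) = h ^ 2 * d ^ 2 / Q := by
    rw [hd]
    field_simp
    norm_num
  calc ‖h • v' x‖ ^ 2 + Q * ‖v x‖ ^ 2
      ≤ 2 * (‖p‖ ^ 2 + h ^ 2 * d ^ 2 * ‖v x‖ ^ 2) + Q * ‖v x‖ ^ 2
        + (h ^ 2 * d ^ 2 / Q * (2 * ‖p‖ ^ 2) + Q * ‖v x‖ ^ 2) := by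
        linarith [show 0 ≤ h ^ 2 * d ^ 2 / Q * (2 * ‖p‖ ^ 2) + Q * ‖v x‖ ^ 2 by positivity]
    _ = (1 + h ^ 2 * d ^ 2 / Q) * (2 * (‖p‖ ^ 2 + Q * ‖v x‖ ^ 2)) := by
        field_simp
        ring
    _ = √Q * (1 + h ^ 2 * V₁ ^ 2 / (16 * Q ^ 3)) *
        (‖wrPlus V h E v v' x‖ ^ 2 + ‖wrMinus V h E v v' x‖ ^ 2) := by
        rw [← wronskians, coefficient_eq]
        ring

end WKB

/-- The function `v`, with derivatives `v'` and `v''`, solves `-h² v'' + (V - E) v = 0` on `[a, b]`;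
derivatives at the endpoints are one-sided. -/
structure IsSchrodingerSolutionOn (V : ℝ → ℝ) (h E a b : ℝ) (v v' v'' : ℝ → ℂ) : Prop where
  hasDerivWithinAt : ∀ x ∈ Icc a b, HasDerivWithinAt v (v' x) (Icc a b) x
  hasDerivWithinAt' : ∀ x ∈ Icc a b, HasDerivWithinAt v' (v'' x) (Icc a b) x
  equation : ∀ x ∈ Icc a b, -(h : ℂ) ^ 2 * v'' x + ((V x - E : ℝ) : ℂ) * v x = 0

section EnergyFromWronskians

variable {V : ℝ → ℝ} {h h₀ E a b c q M : ℝ} {v v' v'' : ℝ → ℂ}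

lemma IsSchrodingerSolutionOn.semiclassicalEnergy_le_left
    (hsol : IsSchrodingerSolutionOn V h E a b v v' v'') (hV : Differentiable ℝ V) (hc : 0 < c)
    (hE : ∀ x ∈ Icc a b, c ≤ E - V x) (hM : ∀ x ∈ Icc a b, |deriv V x| ≤ M) {x : ℝ}
    (hx : x ∈ Icc a b) :
    semiclassicalEnergy h (fun y => E - V y) v v' x ≤
      semiclassicalEnergy h (fun y => E - V y) v v' a * exp (M / c * (x - a)) := by
  have hM₀ : 0 ≤ M := (abs_nonneg _).trans (hM x hx)
  refine semiclassicalEnergy_le_mul_exp (div_nonneg hM₀ hc.le)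
    (fun y hy => hc.le.trans (hE y hy))
    (fun y _ => ((hV y).hasDerivAt.const_sub E).hasDerivWithinAt) (fun y hy => ?_)
    hsol.hasDerivWithinAt hsol.hasDerivWithinAt' (fun y hy => ?_) hx
  · calc |-deriv V y| ≤ M := (abs_neg _).trans_le (hM y hy)
      _ = M / c * c := (div_mul_cancel₀ M hc.ne').symm
      _ ≤ M / c * (E - V y) := by gcongr; exact hE y hy
  · have equation := hsol.equation y hy
    rw [Complex.real_smul, Complex.real_smul]
    push_cast at equation ⊢
    linear_combination -equation

lemma IsSchrodingerSolutionOn.semiclassicalEnergy_le_wronskians_left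
    (hsol : IsSchrodingerSolutionOn V h E a b v v' v'') (hV : Differentiable ℝ V) (hh : 0 < h)
    (hh₀ : h ≤ h₀) (hc : 0 < c) (hE : ∀ x ∈ Icc a b, c ≤ E - V x) (hq : E - V a ≤ q)
    (hM : ∀ x ∈ Icc a b, |deriv V x| ≤ M) {x : ℝ} (hx : x ∈ Icc a b) :
    semiclassicalEnergy h (fun y => E - V y) v v' x ≤
      √q * (1 + h₀ ^ 2 * M ^ 2 / (16 * c ^ 3)) * exp (M / c * (b - a)) *
        (‖wrPlus V h E v v' a‖ ^ 2 + ‖wrMinus V h E v v' a‖ ^ 2) := by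
  have ha : a ∈ Icc a b := left_mem_Icc.2 (hx.1.trans hx.2)
  have hM₀ : 0 ≤ M := (abs_nonneg _).trans (hM x hx)
  have hMa := hM a ha
  have hEa := hE a ha
  have hQ : 0 < E - V a := hc.trans_le hEa
  have initial_le : semiclassicalEnergy h (fun y => E - V y) v v' a ≤
      √q * (1 + h₀ ^ 2 * M ^ 2 / (16 * c ^ 3)) *
        (‖wrPlus V h E v v' a‖ ^ 2 + ‖wrMinus V h E v v' a‖ ^ 2) := by
    refine (semiclassicalEnergy_le_wronskians hh.ne' hV.continuous (hV a).hasDerivAt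
      (sub_pos.1 hQ)).trans ?_
    rw [← sq_abs (deriv V a)]
    gcongr
  calc _ ≤ semiclassicalEnergy h (fun y => E - V y) v v' a * exp (M / c * (x - a)) :=
        hsol.semiclassicalEnergy_le_left hV hc hE hM hx
    _ ≤ √q * (1 + h₀ ^ 2 * M ^ 2 / (16 * c ^ 3)) *
          (‖wrPlus V h E v v' a‖ ^ 2 + ‖wrMinus V h E v v' a‖ ^ 2) * exp (M / c * (b - a)) := by
        gcongr
        exact hx.2
    _ = _ := mul_right_comm _ _ _

end EnergyFromWronskians

section LocallyUniform

open Filter Topology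

lemma exp_neg_one_div_le {x : ℝ} (hx : 0 < x) : exp (-1 / x) ≤ x := by
  rw [neg_div, exp_neg]
  exact inv_le_of_inv_le₀ hx (by linarith [add_one_le_exp (1 / x), one_div x])

lemma exists_forall_abs_sub_le_exp_of_eventually {E₁ : ℝ} {P : ℝ → Prop}
    (hP : ∀ᶠ E in 𝓝 E₁, P E) :
    ∃ h₀ > (0 : ℝ), ∀ h, 0 < h → h < h₀ → ∀ E, |E - (E₁ + h)| ≤ exp (-1 / (10 * h)) → P E := by
  obtain ⟨δ, hδ, hP⟩ := Metric.eventually_nhds_iff.1 hP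
  refine ⟨δ / 11, by positivity, fun h hh hh₀ E hE => hP ?_⟩
  calc |E - E₁| ≤ |E - (E₁ + h)| + |h| := by
        simpa only [sub_add_eq_sub_sub, sub_add_cancel] using abs_add_le (E - (E₁ + h)) h
    _ ≤ 10 * h + h := by
        rw [abs_of_pos hh]
        gcongr
        exact hE.trans (exp_neg_one_div_le (by positivity))
    _ < δ := by linarith

theorem h1_norm_controlled_by_wronskians_general {V : ℝ → ℝ} (hV : ContDiff ℝ 1 V) {E₁ a b : ℝ}
    (hE₁ : ∀ x ∈ Icc a b, V x < E₁) (h₀ : ℝ) :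
    ∃ C > (0 : ℝ), ∀ᶠ E in 𝓝 E₁, ∀ h : ℝ, 0 < h → h ≤ h₀ → ∀ b' ∈ Icc a b,
      ∀ v v' v'' : ℝ → ℂ, IsSchrodingerSolutionOn V h E a b v v' v'' →
        √((∫ x in Ioo a b', ‖v x‖ ^ 2) + ∫ x in Ioo a b', ‖(h : ℂ) * v' x‖ ^ 2)
          ≤ C * (‖wrPlus V h E v v' a‖ + ‖wrMinus V h E v v' a‖) := by
  obtain ⟨g, hg, hVg⟩ : ∃ g, 0 < g ∧ ∀ x ∈ Icc a b, g ≤ E₁ - V x :=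
    isCompact_Icc.exists_forall_le' (continuous_const.sub hV.continuous).continuousOn
      fun x hx => sub_pos.2 (hE₁ x hx)
  obtain ⟨M, hM⟩ := isCompact_Icc.exists_bound_of_continuousOn
    ((hV.continuous_deriv le_rfl).continuousOn (s := Icc a b))
  set A := √(E₁ + g - V a) * (1 + h₀ ^ 2 * M ^ 2 / (16 * (g / 2) ^ 3)) * exp (M / (g / 2) * (b - a))
  set B := (1 / (g / 2) + 1) * (b - a) * A
  refine ⟨√B + 1, by positivity, ?_⟩
  filter_upwards [Icc_mem_nhds (show E₁ - g / 2 < E₁ by linarith) (show E₁ < E₁ + g by linarith)]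
    with E hE h hh hh₀ b' hb' v v' v'' hsol
  have gap : ∀ x ∈ Icc a b, g / 2 ≤ E - V x := fun x hx => by linarith [hVg x hx, hE.1]
  set p := ‖wrPlus V h E v v' a‖
  set m := ‖wrMinus V h E v v' a‖
  have hab : a ≤ b := hb'.1.trans hb'.2
  have energy_le : ∀ x ∈ Icc a b,
      semiclassicalEnergy h (fun y => E - V y) v v' x ≤ A * (p ^ 2 + m ^ 2) := fun x hx =>
    hsol.semiclassicalEnergy_le_wronskians_left (hV.differentiable one_ne_zero) hh hh₀ (half_pos hg)
      gap (by linarith [hE.2]) hM hx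
  have subset : Ioo a b' ⊆ Icc a b := Ioo_subset_Icc_self.trans (Icc_subset_Icc_right hb'.2)
  have integrals_le := setIntegral_norm_sq_add_le_of_semiclassicalEnergy_le hb'.1 (half_pos hg)
    (fun x hx => gap x (subset hx)) (fun x hx => energy_le x (subset hx))
  simp only [Complex.real_smul] at integrals_le
  calc _ ≤ √(B * (p + m) ^ 2) := by
        refine sqrt_le_sqrt (integrals_le.trans ?_)
        calc _ ≤ (1 / (g / 2) + 1) * (b - a) * (A * (p + m) ^ 2) := by
              gcongr
              · exact hb'.2
              · nlinarith [show 0 ≤ p * m by positivity]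
          _ = B * (p + m) ^ 2 := (mul_assoc _ _ _).symm
    _ = √B * (p + m) := by rw [sqrt_mul' _ (sq_nonneg _), sqrt_sq (by positivity)]
    _ ≤ (√B + 1) * (p + m) := by gcongr; exact le_add_of_nonneg_right zero_le_one

end LocallyUniform

/-- For any solution `v` of `(P - E₀) v = 0` on `[3.5, R+1]`, its
semiclassical `H¹_h` norm on `(3.5, R̃)` is controlled by the Wronskians
`|W(v,v₊)(3.5)| + |W(v,v₋)(3.5)|`. -/
theorem h1_norm_controlled_by_wronskians
    (V : ℝ → ℝ)
    (hV_smooth : ContDiff ℝ (⊤ : ℕ∞) V) (hV_comp : HasCompactSupport V)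
    (hV_nonneg : ∀ x, 0 ≤ V x) (hV_even : ∀ x, V (-x) = V x)
    (hV_inner : ∀ x ∈ Set.Icc (-1 : ℝ) 1, V x = x ^ 2 + 1)
    (hV_slope : ∀ x ∈ Set.Icc (2 : ℝ) 3.5, V x = 4 - x)
    (hV_lt : ∀ x : ℝ, 3 < x → V x < 1)
    (hV_supp : tsupport V ⊆ Set.Icc (-5 : ℝ) 5)
    (R : ℝ) (hR : 5 < R) :
    ∃ C > (0 : ℝ), ∃ h₀ > (0 : ℝ), ∀ h : ℝ, 0 < h → h < h₀ →
      ∀ E₀ : ℝ, |E₀ - (1 + h)| ≤ Real.exp (-1 / (10 * h)) →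
      ∀ R' ∈ Set.Icc R (R + 1),
      ∀ v v' v'' : ℝ → ℂ,
        (∀ x ∈ Set.Icc (3.5 : ℝ) (R + 1), HasDerivAt v (v' x) x) →
        (∀ x ∈ Set.Icc (3.5 : ℝ) (R + 1), HasDerivAt v' (v'' x) x) →
        (∀ x ∈ Set.Icc (3.5 : ℝ) (R + 1),
          -(h : ℂ) ^ 2 * v'' x + ((V x - E₀ : ℝ) : ℂ) * v x = 0) →
        Real.sqrt ((∫ x in Set.Ioo (3.5 : ℝ) R', ‖v x‖ ^ 2)
            + ∫ x in Set.Ioo (3.5 : ℝ) R', ‖(h : ℂ) * v' x‖ ^ 2)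
          ≤ C * (‖wrPlus V h E₀ v v' 3.5‖ + ‖wrMinus V h E₀ v v' 3.5‖) := by
  obtain ⟨C, hC, h_eventually⟩ := h1_norm_controlled_by_wronskians_general
    (hV_smooth.of_le (by norm_cast))
    (fun x (hx : x ∈ Icc 3.5 (R + 1)) => hV_lt x (by linarith [hx.1])) 1
  obtain ⟨h₀, hh₀, h_near⟩ := exists_forall_abs_sub_le_exp_of_eventually h_eventually
  refine ⟨C, hC, min h₀ 1, lt_min hh₀ one_pos, fun h hh hlt E₀ hE₀ R' hR' v v' v'' hv hv' heq => ?_⟩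
  exact h_near h hh (hlt.trans_le (min_le_left _ _)) E₀ hE₀ h hh
    (hlt.le.trans (min_le_right _ _)) R' ⟨by linarith [hR'.1], hR'.2⟩ v v' v''
    ⟨fun x hx => (hv x hx).hasDerivWithinAt, fun x hx => (hv' x hx).hasDerivWithinAt, heq⟩
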